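/- Let A : ℝ → ℂ and f : ℝ → ℂ be smooth (infinitely differentiable) and fix x ∈ ℝ. With L_x f(x; h) the flux-form stencil L_x f(x; h) = (1/h²)·[ −(9/8)·A(x − h/2)·((1/24)f(x−2h) − (9/8)f(x−h) + (9/8)f(x) − (1/24)f(x+h)) + (1/24)·A(x − 3h/2)·(−(11/12)f(x−2h) + (17/24)f(x−h) + (3/8)f(x) − (5/24)f(x+h) + (1/24)f(x+2h)) − (1/24)·A(x + 3h/2)·(−(1/24)f(x−2h) + (5/24)f(x−h) − (3/8)f(x) − (17/24)f(x+h) + (11/12)f(x+2h)) + (9/8)·A(x + h/2)·((1/24)f(x−h) − (9/8)f(x) + (9/8)f(x+h) − (1/24)f(x+2h)) ], one has the explicit expansion L_x f(x; h) = (d/dx)(A·f′)(x) + h⁴·ζ(x) + O(h⁶) as h → 0⁺, where ζ = −(1/90)·A·f⁽⁶⁾ − (1/30)·A′·f⁽⁵⁾ − (3/64)·(A″·f⁽⁴⁾ + A‴·f⁽³⁾) − (3/128)·A⁽⁴⁾·f″ − (3/640)·A⁽⁵⁾·f′ evaluated at x. -/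

import Mathlib

noncomputable section

/-- The flux-form fourth-order stencil `L_x f(x; h)` with coefficient `A`. -/
def Lx (A f : ℝ → ℂ) (x h : ℝ) : ℂ :=
  (1 / (h : ℂ) ^ 2) *
    ( -(9 / 8) * A (x - h / 2) *
        ((1 / 24) * f (x - 2 * h) - (9 / 8) * f (x - h) + (9 / 8) * f x
          - (1 / 24) * f (x + h))
      + (1 / 24) * A (x - 3 * h / 2) *
        (-(11 / 12) * f (x - 2 * h) + (17 / 24) * f (x - h) + (3 / 8) * f x
          - (5 / 24) * f (x + h) + (1 / 24) * f (x + 2 * h))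
      - (1 / 24) * A (x + 3 * h / 2) *
        (-(1 / 24) * f (x - 2 * h) + (5 / 24) * f (x - h) - (3 / 8) * f x
          - (17 / 24) * f (x + h) + (11 / 12) * f (x + 2 * h))
      + (9 / 8) * A (x + h / 2) *
        ((1 / 24) * f (x - h) - (9 / 8) * f x + (9 / 8) * f (x + h)
          - (1 / 24) * f (x + 2 * h)) )

/-- The explicit fourth-order error coefficient ζ of the flux-form stencil. -/
def zeta (A f : ℝ → ℂ) (x : ℝ) : ℂ :=
  -(1 / 90) * A x * iteratedDeriv 6 f x
    - (1 / 30) * deriv A x * iteratedDeriv 5 f x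
    - (3 / 64) * (iteratedDeriv 2 A x * iteratedDeriv 4 f x
        + iteratedDeriv 3 A x * iteratedDeriv 3 f x)
    - (3 / 128) * iteratedDeriv 4 A x * iteratedDeriv 2 f x
    - (3 / 640) * iteratedDeriv 5 A x * deriv f x

open Asymptotics Filter Topology in
theorem bigO_iff_aux (F : ℝ → ℂ) (hF : F =O[𝓝[>] (0:ℝ)] (fun h : ℝ => ((h : ℂ)) ^ 6)) :
    ∃ C δ : ℝ, 0 < C ∧ 0 < δ ∧ ∀ h : ℝ, 0 < h → h < δ → ‖F h‖ ≤ C * h ^ 6 := by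
  obtain ⟨C, hC, hb⟩ := hF.exists_pos
  rw [IsBigOWith_def] at hb
  obtain ⟨δ, hδ, hs⟩ := mem_nhdsGT_iff_exists_Ioo_subset.1 hb
  refine ⟨C, δ, hC, hδ, fun h h0 h1 => ?_⟩
  have := hs ⟨h0, h1⟩
  simpa [abs_of_pos h0] using this

/-- degree 7 Taylor polynomial -/
def P7 (g : ℝ → ℂ) (x : ℝ) (t : ℂ) : ℂ :=
  g x + deriv g x * t + iteratedDeriv 2 g x * t ^ 2 / 2 + iteratedDeriv 3 g x * t ^ 3 / 6
    + iteratedDeriv 4 g x * t ^ 4 / 24 + iteratedDeriv 5 g x * t ^ 5 / 120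
    + iteratedDeriv 6 g x * t ^ 6 / 720 + iteratedDeriv 7 g x * t ^ 7 / 5040

open Asymptotics Filter Topology in
theorem taylor7 (g : ℝ → ℂ) (hg : ContDiff ℝ (⊤ : ℕ∞) g) (x c : ℝ) :
    (fun h : ℝ => g (x + c * h) - P7 g x (c * h)) =O[𝓝[>] (0:ℝ)] (fun h : ℝ => (h : ℂ) ^ 8) := by
  have h1 := (taylor_isLittleO_univ (x₀ := x) (n := 8) (contDiff_infty.1 hg 8)).isBigO
  have ht : Tendsto (fun h : ℝ => x + c * h) (𝓝[>] (0:ℝ)) (𝓝 x) := by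
    have : Continuous (fun h : ℝ => x + c * h) := by fun_prop
    have := this.tendsto 0
    simp only [mul_zero, add_zero] at this
    exact this.mono_left nhdsWithin_le_nhds
  have h2 := h1.comp_tendsto ht
  have h3 : (fun h : ℝ => g (x + c * h) - taylorWithinEval g 8 Set.univ x (x + c * h))
      =O[𝓝[>] (0:ℝ)] (fun h : ℝ => (h : ℂ) ^ 8) := by
    refine h2.trans (IsBigO.of_bound (|c| ^ 8) (Eventually.of_forall fun h => ?_))
    simp [mul_pow]
  have h4 : (fun h : ℝ => (c ^ 8 / 40320 * iteratedDeriv 8 g x) * (h : ℂ) ^ 8)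
      =O[𝓝[>] (0:ℝ)] (fun h : ℝ => (h : ℂ) ^ 8) := isBigO_const_mul_self _ _ _
  refine (h3.add h4).congr_left fun h => ?_
  simp only [taylor_within_apply, Finset.sum_range_succ, Finset.sum_range_zero,
    iteratedDerivWithin_univ, P7, Complex.real_smul, iteratedDeriv_zero, iteratedDeriv_one]
  norm_num [Nat.factorial]
  ring

open Asymptotics Filter Topology in
theorem mul_aux (u v p q : ℝ → ℂ) (hu : (fun h => u h - p h) =O[𝓝[>] (0:ℝ)] (fun h : ℝ => (h : ℂ) ^ 8))
    (hv : (fun h => v h - q h) =O[𝓝[>] (0:ℝ)] (fun h : ℝ => (h : ℂ) ^ 8))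
    (hvc : Continuous v) (hpc : Continuous p) :
    (fun h => u h * v h - p h * q h) =O[𝓝[>] (0:ℝ)] (fun h : ℝ => (h : ℂ) ^ 8) := by
  have b1 : v =O[𝓝[>] (0:ℝ)] (fun _ : ℝ => (1:ℂ)) :=
    ((hvc.tendsto 0).mono_left nhdsWithin_le_nhds).isBigO_one ℂ
  have b2 : p =O[𝓝[>] (0:ℝ)] (fun _ : ℝ => (1:ℂ)) :=
    ((hpc.tendsto 0).mono_left nhdsWithin_le_nhds).isBigO_one ℂ
  have e1 := (hu.mul b1).congr_right (g₂ := fun h : ℝ => (h : ℂ) ^ 8) (fun h => by simp)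
  have e2 := (b2.mul hv).congr_right (g₂ := fun h : ℝ => (h : ℂ) ^ 8) (fun h => by simp)
  exact (e1.add e2).congr_left (fun h => by ring)

theorem P7_cont (g : ℝ → ℂ) (x c : ℝ) : Continuous (fun h : ℝ => P7 g x (c * h)) := by
  unfold P7; fun_prop

open Asymptotics Filter Topology in
set_option maxHeartbeats 2000000 in
/-- explicit expansion L_x f(x;h) = (A f')'(x) + h⁴ ζ(x) + O(h⁶). -/
theorem flux_stencil_expansion
    (A f : ℝ → ℂ) (hA : ContDiff ℝ (⊤ : ℕ∞) A) (hf : ContDiff ℝ (⊤ : ℕ∞) f) (x : ℝ) :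
    ∃ C δ : ℝ, 0 < C ∧ 0 < δ ∧ ∀ h : ℝ, 0 < h → h < δ →
      ‖Lx A f x h - (deriv (fun t => A t * deriv f t) x + (h : ℂ) ^ 4 * zeta A f x)‖
        ≤ C * h ^ 6 := by
  apply bigO_iff_aux
  have TA := taylor7 A hA x
  have TF := taylor7 f hf x
  have cA := hA.continuous
  have cf := hf.continuous
  have m0 := mul_aux (fun h : ℝ => A (x + (-1/2:ℝ) * h)) (fun h : ℝ => (1/24) * f (x + (-2:ℝ) * h) + (-9/8) * f (x + (-1:ℝ) * h) + (9/8) * f (x + (0:ℝ) * h) + (-1/24) * f (x + (1:ℝ) * h))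
    (fun h : ℝ => P7 A x (((-1/2:ℝ):ℂ) * h)) (fun h : ℝ => (1/24) * P7 f x (((-2:ℝ):ℂ) * h) + (-9/8) * P7 f x (((-1:ℝ):ℂ) * h) + (9/8) * P7 f x (((0:ℝ):ℂ) * h) + (-1/24) * P7 f x (((1:ℝ):ℂ) * h))
    (TA (-1/2)) ((((((TF (-2)).const_mul_left (1/24)).add ((TF (-1)).const_mul_left (-9/8))).add ((TF (0)).const_mul_left (9/8))).add ((TF (1)).const_mul_left (-1/24))).congr_left (fun h => by ring)) (by fun_prop) (P7_cont A x _)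
  have m1 := mul_aux (fun h : ℝ => A (x + (-3/2:ℝ) * h)) (fun h : ℝ => (-11/12) * f (x + (-2:ℝ) * h) + (17/24) * f (x + (-1:ℝ) * h) + (3/8) * f (x + (0:ℝ) * h) + (-5/24) * f (x + (1:ℝ) * h) + (1/24) * f (x + (2:ℝ) * h))
    (fun h : ℝ => P7 A x (((-3/2:ℝ):ℂ) * h)) (fun h : ℝ => (-11/12) * P7 f x (((-2:ℝ):ℂ) * h) + (17/24) * P7 f x (((-1:ℝ):ℂ) * h) + (3/8) * P7 f x (((0:ℝ):ℂ) * h) + (-5/24) * P7 f x (((1:ℝ):ℂ) * h) + (1/24) * P7 f x (((2:ℝ):ℂ) * h))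
    (TA (-3/2)) (((((((TF (-2)).const_mul_left (-11/12)).add ((TF (-1)).const_mul_left (17/24))).add ((TF (0)).const_mul_left (3/8))).add ((TF (1)).const_mul_left (-5/24))).add ((TF (2)).const_mul_left (1/24))).congr_left (fun h => by ring)) (by fun_prop) (P7_cont A x _)
  have m2 := mul_aux (fun h : ℝ => A (x + (3/2:ℝ) * h)) (fun h : ℝ => (-1/24) * f (x + (-2:ℝ) * h) + (5/24) * f (x + (-1:ℝ) * h) + (-3/8) * f (x + (0:ℝ) * h) + (-17/24) * f (x + (1:ℝ) * h) + (11/12) * f (x + (2:ℝ) * h))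
    (fun h : ℝ => P7 A x (((3/2:ℝ):ℂ) * h)) (fun h : ℝ => (-1/24) * P7 f x (((-2:ℝ):ℂ) * h) + (5/24) * P7 f x (((-1:ℝ):ℂ) * h) + (-3/8) * P7 f x (((0:ℝ):ℂ) * h) + (-17/24) * P7 f x (((1:ℝ):ℂ) * h) + (11/12) * P7 f x (((2:ℝ):ℂ) * h))
    (TA (3/2)) (((((((TF (-2)).const_mul_left (-1/24)).add ((TF (-1)).const_mul_left (5/24))).add ((TF (0)).const_mul_left (-3/8))).add ((TF (1)).const_mul_left (-17/24))).add ((TF (2)).const_mul_left (11/12))).congr_left (fun h => by ring)) (by fun_prop) (P7_cont A x _)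
  have m3 := mul_aux (fun h : ℝ => A (x + (1/2:ℝ) * h)) (fun h : ℝ => (1/24) * f (x + (-1:ℝ) * h) + (-9/8) * f (x + (0:ℝ) * h) + (9/8) * f (x + (1:ℝ) * h) + (-1/24) * f (x + (2:ℝ) * h))
    (fun h : ℝ => P7 A x (((1/2:ℝ):ℂ) * h)) (fun h : ℝ => (1/24) * P7 f x (((-1:ℝ):ℂ) * h) + (-9/8) * P7 f x (((0:ℝ):ℂ) * h) + (9/8) * P7 f x (((1:ℝ):ℂ) * h) + (-1/24) * P7 f x (((2:ℝ):ℂ) * h))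
    (TA (1/2)) ((((((TF (-1)).const_mul_left (1/24)).add ((TF (0)).const_mul_left (-9/8))).add ((TF (1)).const_mul_left (9/8))).add ((TF (2)).const_mul_left (-1/24))).congr_left (fun h => by ring)) (by fun_prop) (P7_cont A x _)
  have hD : deriv (fun t => A t * deriv f t) x = deriv A x * deriv f x + A x * iteratedDeriv 2 f x := by
    have d1 : DifferentiableAt ℝ A x := hA.differentiable (by simp) x
    have d2 : DifferentiableAt ℝ (deriv f) x := by
      have := hf.differentiable_iteratedDeriv 1 (by exact_mod_cast WithTop.coe_lt_top _)
      rw [iteratedDeriv_one] at this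
      exact this x
    rw [deriv_fun_mul d1 d2, iteratedDeriv_succ, iteratedDeriv_one]
  have hQ : (fun h : ℝ => (h:ℂ) ^ 8 * (((-1/252) * (deriv A x) * (iteratedDeriv 7 f x)
      + (-1/128) * (iteratedDeriv 2 A x) * (iteratedDeriv 6 f x)
      + (-3/256) * (iteratedDeriv 3 A x) * (iteratedDeriv 5 f x)
      + (-5/512) * (iteratedDeriv 4 A x) * (iteratedDeriv 4 f x)
      + (-3/512) * (iteratedDeriv 5 A x) * (iteratedDeriv 3 f x)
      + (-1/512) * (iteratedDeriv 6 A x) * (iteratedDeriv 2 f x)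
      + (-1/3584) * (iteratedDeriv 7 A x) * (deriv f x)) * (h:ℂ) ^ 0 + ((-3/2560) * (iteratedDeriv 3 A x) * (iteratedDeriv 7 f x)
      + (-7/5120) * (iteratedDeriv 4 A x) * (iteratedDeriv 6 f x)
      + (-67/51200) * (iteratedDeriv 5 A x) * (iteratedDeriv 5 f x)
      + (-91/122880) * (iteratedDeriv 6 A x) * (iteratedDeriv 4 f x)
      + (-13/40960) * (iteratedDeriv 7 A x) * (iteratedDeriv 3 f x)) * (h:ℂ) ^ 2 + ((-11/86016) * (iteratedDeriv 5 A x) * (iteratedDeriv 7 f x)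
      + (-5/49152) * (iteratedDeriv 6 A x) * (iteratedDeriv 6 f x)
      + (-241/3440640) * (iteratedDeriv 7 A x) * (iteratedDeriv 5 f x)) * (h:ℂ) ^ 4 + ((-4933/722534400) * (iteratedDeriv 7 A x) * (iteratedDeriv 7 f x)) * (h:ℂ) ^ 6)) =O[𝓝[>] (0:ℝ)] (fun h : ℝ => (h : ℂ) ^ 8) := by
    have b : (fun h : ℝ => ((-1/252) * (deriv A x) * (iteratedDeriv 7 f x)
      + (-1/128) * (iteratedDeriv 2 A x) * (iteratedDeriv 6 f x)
      + (-3/256) * (iteratedDeriv 3 A x) * (iteratedDeriv 5 f x)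
      + (-5/512) * (iteratedDeriv 4 A x) * (iteratedDeriv 4 f x)
      + (-3/512) * (iteratedDeriv 5 A x) * (iteratedDeriv 3 f x)
      + (-1/512) * (iteratedDeriv 6 A x) * (iteratedDeriv 2 f x)
      + (-1/3584) * (iteratedDeriv 7 A x) * (deriv f x)) * (h:ℂ) ^ 0 + ((-3/2560) * (iteratedDeriv 3 A x) * (iteratedDeriv 7 f x)
      + (-7/5120) * (iteratedDeriv 4 A x) * (iteratedDeriv 6 f x)
      + (-67/51200) * (iteratedDeriv 5 A x) * (iteratedDeriv 5 f x)
      + (-91/122880) * (iteratedDeriv 6 A x) * (iteratedDeriv 4 f x)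
      + (-13/40960) * (iteratedDeriv 7 A x) * (iteratedDeriv 3 f x)) * (h:ℂ) ^ 2 + ((-11/86016) * (iteratedDeriv 5 A x) * (iteratedDeriv 7 f x)
      + (-5/49152) * (iteratedDeriv 6 A x) * (iteratedDeriv 6 f x)
      + (-241/3440640) * (iteratedDeriv 7 A x) * (iteratedDeriv 5 f x)) * (h:ℂ) ^ 4 + ((-4933/722534400) * (iteratedDeriv 7 A x) * (iteratedDeriv 7 f x)) * (h:ℂ) ^ 6) =O[𝓝[>] (0:ℝ)] (fun _ : ℝ => (1:ℂ)) :=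
      ((Continuous.tendsto (by fun_prop) 0).mono_left nhdsWithin_le_nhds).isBigO_one ℂ
    exact ((isBigO_refl _ _).mul b).congr_right (fun h => by simp)
  have tot := ((((m0.const_mul_left (-9/8)).add (m1.const_mul_left (1/24))).add (m2.const_mul_left (-1/24))).add (m3.const_mul_left (9/8))).add hQ
  have i2 : (fun h : ℝ => 1 / (h:ℂ) ^ 2) =O[𝓝[>] (0:ℝ)] (fun h : ℝ => 1 / (h:ℂ) ^ 2) := isBigO_refl _ _
  refine (i2.mul tot).congr' ?_ ?_
  · filter_upwards [self_mem_nhdsWithin] with h hh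
    have h0 : (h:ℂ) ≠ 0 := by exact_mod_cast (ne_of_gt hh)
    rw [hD]
    have key : Lx A f x h = 1 / (h:ℂ) ^ 2 * ((h:ℂ) ^ 2 * Lx A f x h) := by field_simp
    have key2 : ∀ z : ℂ, z = 1 / (h:ℂ) ^ 2 * ((h:ℂ) ^ 2 * z) := fun z => by field_simp
    rw [key2 (Lx A f x h - _)]
    congr 1
    rw [mul_sub ((h:ℂ) ^ 2) (Lx A f x h)]
    have e : (h:ℂ) ^ 2 * Lx A f x h = (-9/8) * (A (x + (-1/2:ℝ) * h) * ((1/24) * f (x + (-2:ℝ) * h) + (-9/8) * f (x + (-1:ℝ) * h) + (9/8) * f (x + (0:ℝ) * h) + (-1/24) * f (x + (1:ℝ) * h))) + (1/24) * (A (x + (-3/2:ℝ) * h) * ((-11/12) * f (x + (-2:ℝ) * h) + (17/24) * f (x + (-1:ℝ) * h) + (3/8) * f (x + (0:ℝ) * h) + (-5/24) * f (x + (1:ℝ) * h) + (1/24) * f (x + (2:ℝ) * h))) + (-1/24) * (A (x + (3/2:ℝ) * h) * ((-1/24) * f (x + (-2:ℝ) * h) + (5/24) * f (x + (-1:ℝ)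 * h) + (-3/8) * f (x + (0:ℝ) * h) + (-17/24) * f (x + (1:ℝ) * h) + (11/12) * f (x + (2:ℝ) * h))) + (9/8) * (A (x + (1/2:ℝ) * h) * ((1/24) * f (x + (-1:ℝ) * h) + (-9/8) * f (x + (0:ℝ) * h) + (9/8) * f (x + (1:ℝ) * h) + (-1/24) * f (x + (2:ℝ) * h))) := by
      unfold Lx
      rw [← mul_assoc, mul_one_div_cancel (pow_ne_zero 2 h0), one_mul]
      rw [show x - h / 2 = x + (-1/2:ℝ) * h by ring, show x - 3 * h / 2 = x + (-3/2:ℝ) * h by ring,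
        show x + 3 * h / 2 = x + (3/2:ℝ) * h by ring, show x + h / 2 = x + (1/2:ℝ) * h by ring,
        show x - 2 * h = x + (-2:ℝ) * h by ring, show x - h = x + (-1:ℝ) * h by ring,
        show x + h = x + (1:ℝ) * h by ring, show f x = f (x + (0:ℝ) * h) by simp]
      ring
    rw [e]
    simp only [P7, zeta]
    push_cast
    ring
  · filter_upwards [self_mem_nhdsWithin] with h hh
    have h0 : (h:ℂ) ≠ 0 := by exact_mod_cast (ne_of_gt hh)
    field_simp

end
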